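/- arXiv:0910.4715 — 2 statements merged into one kernel-verified Lean document; each statement's English description precedes it below -/
import Mathlib

section
/- Let m, n be natural numbers with 0 ≤ m ≤ n, and let x > 1 be real. Then d^m/dx^m [P_n(x)·log(x+1)] = P_n^{(m)}(x)·log(x+1) − (ψ(n+m+1) − 2ψ(n+1) + ψ(n−m+1))·P_n^{(m)}(x) − 2^{−m} Σ_{k=0}^{n−m} ((k+n+m)!·ψ(k+m+1))/(k!·(k+m)!·(n−m−k)!) · ((x−1)/2)^k + ((n+m)!/(n−m)!)·(x+1)^{−m} Σ_{k=0}^{n} ((k+n)!·ψ(k+m+1))/(k!·(k+m)!·(n−k)!) · ((x−1)/2)^k. -/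
open Finset Real

/-- The Legendre polynomial `P_n`, via its explicit expansion
`P_n(x) = ∑_{k=0}^{n} ((n+k)!/((k!)² (n−k)!)) ((x−1)/2)^k`. -/
noncomputable def legendreP (n : ℕ) (x : ℝ) : ℝ :=
  ∑ k ∈ Finset.range (n + 1),
    (((n + k).factorial : ℝ) / (((k.factorial : ℝ)) ^ 2 * ((n - k).factorial : ℝ))) *
      ((x - 1) / 2) ^ k

/-- The harmonic number `H_i = ∑_{r=1}^{i} 1/r`. -/
noncomputable def harm (i : ℕ) : ℝ := ∑ r ∈ Finset.range i, (1 : ℝ) / (r + 1)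

/-- The digamma function at a positive integer `j`: `ψ(j) = H_{j−1} − γ`. -/
noncomputable def psi (j : ℕ) : ℝ := harm (j - 1) - Real.eulerMascheroniConstant

/-- coefficient of the transformed sum -/
noncomputable def ecoef (n m k : ℕ) : ℝ :=
  ((k + n).factorial : ℝ) / ((k.factorial : ℝ) * ((k + m).factorial : ℝ) * ((n - k).factorial : ℝ))

/-- coefficient of the differentiated sum -/
noncomputable def acoef (n m k : ℕ) : ℝ :=
  ((k + n + m).factorial : ℝ) /
    ((k.factorial : ℝ) * ((k + m).factorial : ℝ) * ((n - m - k).factorial : ℝ))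

noncomputable def Esum (f : ℕ → ℝ) (n m : ℕ) (x : ℝ) : ℝ :=
  ∑ k ∈ Finset.range (n + 1), ecoef n m k * f (k + m) * ((x - 1) / 2) ^ k

noncomputable def Asum (f : ℕ → ℝ) (n m : ℕ) (x : ℝ) : ℝ :=
  ∑ k ∈ Finset.range (n - m + 1), acoef n m k * f (k + m) * ((x - 1) / 2) ^ k

noncomputable def Wf (f : ℕ → ℝ) (n m : ℕ) (x : ℝ) : ℝ := (2 : ℝ) ^ (-(m : ℤ)) * Asum f n m x

noncomputable def Bc (n m : ℕ) : ℝ := ((n + m).factorial : ℝ) / ((n - m).factorial : ℝ)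

noncomputable def Vf (f : ℕ → ℝ) (n m : ℕ) (x : ℝ) : ℝ :=
  Bc n m * (x + 1) ^ (-(m : ℤ)) * Esum f n m x

lemma ecoef_succ_k (n m k : ℕ) (h : k < n) :
    ecoef n m (k + 1) * ((k : ℝ) + 1) * ((k : ℝ) + m + 1)
      = ecoef n m k * ((n : ℝ) + k + 1) * ((n : ℝ) - k) := by
  obtain ⟨d, rfl⟩ : ∃ d, n = k + 1 + d := ⟨n - (k + 1), by omega⟩
  unfold ecoef
  have h1 : k + 1 + d - (k + 1) = d := by omega
  have h2 : k + 1 + d - k = d + 1 := by omega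
  have h3 : k + 1 + (k + 1 + d) = (k + (k + 1 + d)) + 1 := by ring
  have h4 : k + 1 + m = (k + m) + 1 := by ring
  rw [h1, h2, h3, h4, Nat.factorial_succ, Nat.factorial_succ k, Nat.factorial_succ (k + m),
    Nat.factorial_succ d]
  have := Nat.factorial_ne_zero k
  have := Nat.factorial_ne_zero (k + m)
  have := Nat.factorial_ne_zero d
  push_cast
  field_simp
  ring

lemma ecoef_succ_m (n m k : ℕ) :
    ecoef n m k = ((k : ℝ) + m + 1) * ecoef n (m + 1) k := by
  unfold ecoef
  rw [← add_assoc, Nat.factorial_succ (k + m)]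
  have := Nat.factorial_ne_zero k
  have := Nat.factorial_ne_zero (k + m)
  have := Nat.factorial_ne_zero (n - k)
  push_cast
  field_simp

lemma acoef_succ (n m k : ℕ) (h : m < n) :
    acoef n m (k + 1) * ((k : ℝ) + 1) = acoef n (m + 1) k := by
  unfold acoef
  have h1 : n - m - (k + 1) = n - (m + 1) - k := by omega
  have h2 : k + 1 + n + m = k + n + (m + 1) := by ring
  have h3 : k + 1 + m = k + (m + 1) := by ring
  rw [h1, h2, h3, Nat.factorial_succ k]
  have := Nat.factorial_ne_zero k
  have := Nat.factorial_ne_zero (k + (m + 1))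
  have := Nat.factorial_ne_zero (n - (m + 1) - k)
  push_cast
  field_simp

lemma Bc_succ (n m : ℕ) (h : m < n) :
    Bc n (m + 1) = Bc n m * ((n : ℝ) + m + 1) * ((n : ℝ) - m) := by
  obtain ⟨d, rfl⟩ : ∃ d, n = m + 1 + d := ⟨n - (m + 1), by omega⟩
  unfold Bc
  have h1 : m + 1 + d - (m + 1) = d := by omega
  have h2 : m + 1 + d - m = d + 1 := by omega
  rw [h1, h2, ← add_assoc, Nat.factorial_succ d, Nat.factorial_succ (m + 1 + d + m)]
  have := Nat.factorial_ne_zero d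
  push_cast
  field_simp
  ring

lemma hasDerivAt_polysum (g : ℕ → ℝ) (N : ℕ) (x : ℝ) :
    HasDerivAt (fun y : ℝ => ∑ k ∈ Finset.range (N + 1), g k * ((y - 1) / 2) ^ k)
      (∑ k ∈ Finset.range N, g (k + 1) * (((k : ℝ) + 1) * ((x - 1) / 2) ^ k * (1 / 2))) x := by
  have hb : HasDerivAt (fun y : ℝ => (y - 1) / 2) (1 / 2) x :=
    ((hasDerivAt_id x).sub_const 1).div_const 2
  have h : HasDerivAt (fun y : ℝ => ∑ k ∈ Finset.range (N + 1), g k * ((y - 1) / 2) ^ k)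
      (∑ k ∈ Finset.range (N + 1), g k * ((k : ℝ) * ((x - 1) / 2) ^ (k - 1) * (1 / 2))) x := by
    apply HasDerivAt.fun_sum
    intro k _
    exact (hb.pow k).const_mul (g k)
  rw [Finset.sum_range_succ'] at h
  simpa using h

lemma hasDerivAt_Wf (f : ℕ → ℝ) (n m : ℕ) (h : m < n) (x : ℝ) :
    HasDerivAt (Wf f n m) (Wf f n (m + 1) x) x := by
  have h1 := (hasDerivAt_polysum (fun k => acoef n m k * f (k + m)) (n - m) x).const_mul
    ((2 : ℝ) ^ (-(m : ℤ)))
  refine h1.congr_deriv ?_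
  unfold Wf Asum
  have h2 : n - (m + 1) + 1 = n - m := by omega
  rw [h2, Finset.mul_sum, Finset.mul_sum]
  refine Finset.sum_congr rfl fun k _ => ?_
  rw [← acoef_succ n m k h]
  have h3 : k + 1 + m = k + (m + 1) := by ring
  have h4 : (2 : ℝ) ^ (-((m + 1 : ℕ) : ℤ)) = (2 : ℝ) ^ (-(m : ℤ)) * (1 / 2) := by
    rw [zpow_neg, zpow_neg, zpow_natCast, zpow_natCast, pow_succ]
    field_simp
  rw [h3, h4]
  ring

lemma Esum_identity (f : ℕ → ℝ) (c : ℝ) (hf : ∀ j : ℕ, f (j + 1) = f j + c / ((j : ℝ) + 1))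
    (n m : ℕ) (x : ℝ) :
    (x + 1) * (∑ k ∈ Finset.range n, (ecoef n m (k + 1) * f (k + 1 + m)) *
        (((k : ℝ) + 1) * ((x - 1) / 2) ^ k * (1 / 2))) - m * Esum f n m x
    = ((n : ℝ) + m + 1) * ((n : ℝ) - m) * Esum f n (m + 1) x
      - c * (Esum (fun _ => 1) n m x - (2 * m + 1) * Esum (fun _ => 1) n (m + 1) x) := by
  have hx : x + 1 = 2 * ((x - 1) / 2) + 2 := by ring
  rw [hx]
  generalize ht : (x - 1) / 2 = t
  have e1 : (2 * t + 2) * (∑ k ∈ Finset.range n, (ecoef n m (k + 1) * f (k + 1 + m)) *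
        (((k : ℝ) + 1) * t ^ k * (1 / 2)))
      = (∑ k ∈ Finset.range (n + 1), (k : ℝ) * ecoef n m k * f (k + m) * t ^ k)
        + ∑ k ∈ Finset.range (n + 1),
          ecoef n m k * ((n : ℝ) + k + 1) * ((n : ℝ) - k) / ((k : ℝ) + m + 1)
            * f (k + m + 1) * t ^ k := by
    rw [Finset.sum_range_succ', Finset.sum_range_succ _ n]
    simp only [Nat.cast_zero, zero_mul, add_zero, sub_self, mul_zero, zero_div]
    rw [Finset.mul_sum, ← Finset.sum_add_distrib]
    refine Finset.sum_congr rfl fun k hk => ?_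
    rw [← ecoef_succ_k n m k (Finset.mem_range.1 hk)]
    have h3 : k + 1 + m = k + m + 1 := by ring
    have : (k : ℝ) + m + 1 ≠ 0 := by positivity
    rw [h3]
    push_cast
    field_simp
    ring
  rw [e1]
  unfold Esum
  rw [ht]
  simp only [Finset.mul_sum, ← Finset.sum_add_distrib, ← Finset.sum_sub_distrib]
  refine Finset.sum_congr rfl fun k _ => ?_
  have h4 := hf (k + m)
  rw [← add_assoc, h4, ecoef_succ_m n m k]
  have : (k : ℝ) + m + 1 ≠ 0 := by positivity
  push_cast
  field_simp
  ring

lemma hasDerivAt_Vf (f : ℕ → ℝ) (c : ℝ) (hf : ∀ j : ℕ, f (j + 1) = f j + c / ((j : ℝ) + 1))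
    (n m : ℕ) (h : m < n) (x : ℝ) (hx : 1 < x) :
    HasDerivAt (Vf f n m) (Vf f n (m + 1) x - c * ((x + 1)⁻¹ * Vf (fun _ => 1) n m x
      + (1 / ((n : ℝ) + m + 1) - 1 / ((n : ℝ) - m)) * Vf (fun _ => 1) n (m + 1) x)) x := by
  have hx0 : x + 1 ≠ 0 := by linarith
  have h1 := hasDerivAt_polysum (fun k => ecoef n m k * f (k + m)) n x
  have h2 : HasDerivAt (fun y : ℝ => (y + 1) ^ (-(m : ℤ)))
      (((-(m : ℤ) : ℤ) : ℝ) * (x + 1) ^ (-(m : ℤ) - 1)) x := by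
    have := (hasDerivAt_zpow (-(m : ℤ)) (x + 1) (Or.inl hx0)).comp x
      ((hasDerivAt_id x).add_const 1)
    simpa [Function.comp_def] using this
  have h3 := (h2.const_mul (Bc n m)).mul h1
  refine HasDerivAt.congr_deriv (f := Vf f n m) h3 ?_
  have key := Esum_identity f c hf n m x
  have e1 : (x + 1) ^ (-(m : ℤ)) = (x + 1) ^ (-(m : ℤ) - 1) * (x + 1) := by
    rw [← zpow_add_one₀ hx0]; congr 1; ring
  have e2 : (x + 1) ^ (-((m + 1 : ℕ) : ℤ)) = (x + 1) ^ (-(m : ℤ) - 1) := by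
    congr 1; push_cast; ring
  have hE : ∑ k ∈ Finset.range (n + 1), ecoef n m k * f (k + m) * ((x - 1) / 2) ^ k
    = Esum f n m x := rfl
  simp only [Vf]
  rw [hE, Bc_succ n m h, e2, e1]
  have hm : (n : ℝ) - m ≠ 0 := by
    have : (m : ℝ) < n := by exact_mod_cast h
    linarith
  have hp : (n : ℝ) + m + 1 ≠ 0 := by positivity
  generalize (∑ k ∈ Finset.range n, (ecoef n m (k + 1) * f (k + 1 + m)) *
        (((k : ℝ) + 1) * ((x - 1) / 2) ^ k * (1 / 2))) = S at *
  generalize (x + 1) ^ (-(m : ℤ) - 1) = z at *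
  push_cast
  field_simp
  linear_combination (Bc n m * z) * key

lemma W_zero (f : ℕ → ℝ) (n : ℕ) (x : ℝ) : Wf f n 0 x = Vf f n 0 x := by
  have : Bc n 0 = 1 := by
    unfold Bc
    simp [Nat.factorial_ne_zero]
  simp [Wf, Vf, Asum, Esum, acoef, ecoef, this]

lemma W_eq_V (n m : ℕ) (h : m ≤ n) (x : ℝ) (hx : 1 < x) :
    Wf (fun _ => 1) n m x = Vf (fun _ => 1) n m x := by
  induction m generalizing x with
  | zero => exact W_zero _ n x
  | succ m ih =>
    have h1 := hasDerivAt_Wf (fun _ => 1) n m (by omega) x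
    have h2 := hasDerivAt_Vf (fun _ => 1) 0 (by simp) n m (by omega) x hx
    have he : Wf (fun _ => 1) n m =ᶠ[nhds x] Vf (fun _ => 1) n m := by
      filter_upwards [Ioi_mem_nhds hx] with y hy using ih (by omega) y hy
    have := h1.unique (h2.congr_of_eventuallyEq he)
    simpa using this

lemma legendreP_eq (n : ℕ) : legendreP n = Wf (fun _ => 1) n 0 := by
  funext x
  simp [legendreP, Wf, Asum, acoef, pow_two, add_comm n]

lemma iter_P (n m : ℕ) (h : m ≤ n) : iteratedDeriv m (legendreP n) = Wf (fun _ => 1) n m := by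
  induction m with
  | zero => rw [iteratedDeriv_zero, legendreP_eq]
  | succ m ih =>
    rw [iteratedDeriv_succ, ih (by omega)]
    funext x
    exact (hasDerivAt_Wf _ n m (by omega) x).deriv

lemma psi_succ (j : ℕ) : psi (j + 2) = psi (j + 1) + 1 / ((j : ℝ) + 1) := by
  simp only [psi, harm, Nat.add_sub_cancel, show j + 2 - 1 = j + 1 by omega,
    Finset.sum_range_succ]
  ring

lemma main_id (n m : ℕ) (h : m ≤ n) (x : ℝ) (hx : 1 < x) :
    iteratedDeriv m (fun y => legendreP n y * Real.log (y + 1)) x =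
      Wf (fun _ => 1) n m x * Real.log (x + 1)
      - (psi (n + m + 1) - 2 * psi (n + 1) + psi (n - m + 1)) * Wf (fun _ => 1) n m x
      - Wf (fun k => psi (k + 1)) n m x + Vf (fun k => psi (k + 1)) n m x := by
  induction m generalizing x with
  | zero =>
    rw [iteratedDeriv_zero, legendreP_eq, W_zero (fun k => psi (k + 1))]
    simp only [add_zero, Nat.sub_zero]
    ring
  | succ m ih =>
    have hx0 : x + 1 ≠ 0 := by linarith
    have hm : m < n := by omega
    rw [iteratedDeriv_succ]
    have he : iteratedDeriv m (fun y => legendreP n y * Real.log (y + 1)) =ᶠ[nhds x]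
        fun x => Wf (fun _ => 1) n m x * Real.log (x + 1)
      - (psi (n + m + 1) - 2 * psi (n + 1) + psi (n - m + 1)) * Wf (fun _ => 1) n m x
      - Wf (fun k => psi (k + 1)) n m x + Vf (fun k => psi (k + 1)) n m x := by
      filter_upwards [Ioi_mem_nhds hx] with y hy using ih (by omega) y hy
    rw [he.deriv_eq]
    have hl : HasDerivAt (fun y : ℝ => Real.log (y + 1)) (1 / (x + 1)) x :=
      ((hasDerivAt_id x).add_const 1).log hx0
    have d1 := hasDerivAt_Wf (fun _ => 1) n m hm x
    have d2 := hasDerivAt_Wf (fun k => psi (k + 1)) n m hm x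
    have d3 := hasDerivAt_Vf (fun k => psi (k + 1)) 1 psi_succ n m hm x hx
    have d := (((d1.mul hl).sub (d1.const_mul
      (psi (n + m + 1) - 2 * psi (n + 1) + psi (n - m + 1)))).sub d2).add d3
    refine (HasDerivAt.deriv d).trans ?_
    rw [← W_eq_V n m (by omega) x hx, ← W_eq_V n (m + 1) h x hx]
    have p1 : psi (n + (m + 1) + 1) = psi (n + m + 1) + 1 / ((n : ℝ) + m + 1) := by
      have := psi_succ (n + m)
      push_cast at this
      exact this
    have p2 : psi (n - m + 1) = psi (n - (m + 1) + 1) + 1 / ((n : ℝ) - m) := by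
      have := psi_succ (n - (m + 1))
      rw [show n - m + 1 = n - (m + 1) + 2 by omega, this, Nat.cast_sub h]
      push_cast
      ring
    rw [p1, p2]
    ring

theorem stmt_2 (m n : ℕ) (hmn : m ≤ n) (x : ℝ) (hx : 1 < x) :
    iteratedDeriv m (fun y => legendreP n y * Real.log (y + 1)) x =
      iteratedDeriv m (legendreP n) x * Real.log (x + 1)
      - (psi (n + m + 1) - 2 * psi (n + 1) + psi (n - m + 1)) *
          iteratedDeriv m (legendreP n) x
      - (2 : ℝ) ^ (-(m : ℤ)) *
          ∑ k ∈ Finset.range (n - m + 1),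
            (((k + n + m).factorial : ℝ) * psi (k + m + 1)) /
                ((k.factorial : ℝ) * ((k + m).factorial : ℝ) * ((n - m - k).factorial : ℝ)) *
              ((x - 1) / 2) ^ k
      + ((n + m).factorial : ℝ) / ((n - m).factorial : ℝ) * (x + 1) ^ (-(m : ℤ)) *
          ∑ k ∈ Finset.range (n + 1),
            (((k + n).factorial : ℝ) * psi (k + m + 1)) /
                ((k.factorial : ℝ) * ((k + m).factorial : ℝ) * ((n - k).factorial : ℝ)) *
              ((x - 1) / 2) ^ k := by
  rw [main_id n m hmn x hx, iter_P n m hmn]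
  have e1 : ∀ (a b c : ℝ), a / b * c = a * c / b := fun a b c => by ring
  simp only [Wf, Vf, Asum, Esum, Bc, acoef, ecoef]
  have s1 : ∀ (N : ℕ) (a b g t : ℕ → ℝ),
      ∑ k ∈ Finset.range N, a k / b k * g k * t k
        = ∑ k ∈ Finset.range N, a k * g k / b k * t k := by
    intro N a b g t
    refine Finset.sum_congr rfl fun k _ => ?_
    rw [e1]
  simp only [s1, e1]
end

section
/- Let m, n be natural numbers with 0 ≤ m ≤ n, and let x > 1 be real. Then d^m/dx^m [P_n(x)·log(x−1)] = P_n^{(m)}(x)·log(x−1) + (ψ(n+1) − ψ(n−m+1))·P_n^{(m)}(x) + ((n+m)!/(n−m)!)·(x−1)^{−m} Σ_{k=0}^{m−1} (−1)^k·((2k+1)/((n−k)(k+n+1))) · Σ_{j=0}^{k} (−1)^j·((k+j)!/((k−j)!·(m+j)!·j!))·((x+1)/2)^j − Σ_{k=0}^{n−m−1} ((2k+2m+1)/((n−m−k)(k+n+m+1)))·(1 − (k!·(n+m)!)/((k+2m)!·(n−m)!))·P_{k+m}^{(m)}(x). -/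
open Finset Real

lemma aux_diff (K : ℕ) : ∀ a d : ℕ,
    ∑ l ∈ Finset.range (K + 1), (-1 : ℝ) ^ l * (K.choose l : ℝ) *
      ((a + l).factorial : ℝ) / ((a + d + 1 + l).factorial : ℝ)
      = (a.factorial : ℝ) * ((d + K).factorial : ℝ) /
        ((d.factorial : ℝ) * ((a + d + 1 + K).factorial : ℝ)) := by
  induction K with
  | zero =>
    intro a d
    have := Nat.factorial_ne_zero d
    simp
    field_simp
  | succ K ih =>
    intro a d
    have key : ∑ l ∈ Finset.range (K + 1 + 1), (-1 : ℝ) ^ l * ((K+1).choose l : ℝ) *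
        ((a + l).factorial : ℝ) / ((a + d + 1 + l).factorial : ℝ)
        = (∑ l ∈ Finset.range (K + 1), (-1 : ℝ) ^ l * (K.choose l : ℝ) *
            ((a + l).factorial : ℝ) / ((a + d + 1 + l).factorial : ℝ))
          - ∑ l ∈ Finset.range (K + 1), (-1 : ℝ) ^ l * (K.choose l : ℝ) *
            ((a + 1 + l).factorial : ℝ) / ((a + 1 + d + 1 + l).factorial : ℝ) := by
      rw [Finset.sum_range_succ']
      have e1 : ∑ l ∈ Finset.range (K + 1), (-1 : ℝ) ^ l * (K.choose l : ℝ) *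
            ((a + l).factorial : ℝ) / ((a + d + 1 + l).factorial : ℝ)
          = ∑ l ∈ Finset.range (K + 1), (-1 : ℝ) ^ (l+1) * (K.choose (l+1) : ℝ) *
            ((a + (l+1)).factorial : ℝ) / ((a + d + 1 + (l+1)).factorial : ℝ)
            + (-1 : ℝ) ^ 0 * (K.choose 0 : ℝ) *
            ((a + 0).factorial : ℝ) / ((a + d + 1 + 0).factorial : ℝ) := by
        rw [← Finset.sum_range_succ' (fun l => (-1 : ℝ) ^ l * (K.choose l : ℝ) *
            ((a + l).factorial : ℝ) / ((a + d + 1 + l).factorial : ℝ)),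
          Finset.sum_range_succ _ (K+1)]
        simp
      rw [e1, add_sub_right_comm, ← Finset.sum_sub_distrib]
      congr 1
      · apply Finset.sum_congr rfl
        intro l _
        rw [Nat.choose_succ_succ, show a + 1 + l = a + (l + 1) by ring,
          show a + 1 + d + 1 + l = a + d + 1 + (l + 1) by ring]
        push_cast
        ring
      · simp
    rw [key, ih a d, ih (a+1) d]
    rw [show a + 1 + d + 1 + K = (a + d + 1 + K) + 1 by ring,
      show a + d + 1 + (K + 1) = (a + d + 1 + K) + 1 by ring,
      show d + (K + 1) = (d + K) + 1 by ring]
    simp only [Nat.factorial_succ (a + d + 1 + K), Nat.factorial_succ (d + K),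
      Nat.factorial_succ a]
    have h1 : (d.factorial : ℝ) ≠ 0 := by positivity
    have h2 : ((a + d + 1 + K).factorial : ℝ) ≠ 0 := by positivity
    have h3 : ((a : ℝ) + d + 1 + K + 1) ≠ 0 := by positivity
    push_cast
    field_simp
    ring

lemma aux_tel (i m n : ℕ) (h : m < i) (hn : i ≤ n) :
    ∑ q ∈ Finset.Ico i n, (2 * (q : ℝ) + 1) * ((q + i).factorial : ℝ) *
      ((q - (m + 1)).factorial : ℝ) / (((q - i).factorial : ℝ) * ((q + m + 1).factorial : ℝ))
    = ((n + i).factorial : ℝ) * ((n - (m + 1)).factorial : ℝ) * ((n : ℝ) - i) /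
      (((n - i).factorial : ℝ) * ((n + m).factorial : ℝ) * ((i : ℝ) - m)) := by
  induction n, hn using Nat.le_induction with
  | base => simp
  | succ n hn ih =>
    rw [Finset.sum_Ico_succ_top hn, ih]
    obtain ⟨f, rfl⟩ := Nat.exists_eq_add_of_lt h
    obtain ⟨e, rfl⟩ := Nat.exists_eq_add_of_le hn
    rw [show m + f + 1 + e - (m + 1) = f + e by omega,
      show m + f + 1 + e + 1 - (m + 1) = f + e + 1 by omega,
      show m + f + 1 + e + 1 - (m + f + 1) = e + 1 by omega,
      show m + f + 1 + e - (m + f + 1) = e by omega,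
      show m + f + 1 + e + 1 + m = (m + f + 1 + e + m) + 1 by ring,
      show m + f + 1 + e + 1 + (m + f + 1) = (m + f + 1 + e + (m + f + 1)) + 1 by ring]
    rw [Nat.factorial_succ (m + f + 1 + e + m), Nat.factorial_succ e, Nat.factorial_succ (f + e),
      Nat.factorial_succ (m + f + 1 + e + (m + f + 1))]
    have h1 : (e.factorial : ℝ) ≠ 0 := by positivity
    have h2 : ((m + f + 1 + e + m).factorial : ℝ) ≠ 0 := by positivity
    have h3 : ((m : ℝ) + f + 1 + e + m + 1) ≠ 0 := by positivity
    have h4 : ((f : ℝ) + 1) ≠ 0 := by positivity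
    have h5 : ((e : ℝ) + 1) ≠ 0 := by positivity
    push_cast
    rw [show ((m : ℝ) + f + 1 - m) = f + 1 by ring]
    field_simp
    ring

lemma aux_B (i M : ℕ) (hi : i ≤ M) : ∀ n : ℕ, M + 1 ≤ n →
    ∑ k ∈ Finset.Ico i (M + 1), (-1 : ℝ) ^ k * (2 * (k : ℝ) + 1) * ((k + i).factorial : ℝ) /
      (((k - i).factorial : ℝ) * ((M - k).factorial : ℝ) * ((M + 1 + k).factorial : ℝ)) /
        (((n : ℝ) - k) * ((k : ℝ) + n + 1))
    = (-1 : ℝ) ^ M * ((n + i).factorial : ℝ) * ((n - (M + 1)).factorial : ℝ) /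
      (((n - i).factorial : ℝ) * ((n + (M + 1)).factorial : ℝ)) := by
  induction M, hi using Nat.le_induction with
  | base =>
    intro n hn
    obtain ⟨e, rfl⟩ := Nat.exists_eq_add_of_le hn
    simp only [Nat.Ico_succ_singleton, Finset.sum_singleton]
    rw [show i + 1 + e - i = e + 1 by omega, show i + 1 + e - (i + 1) = e by omega,
      show i + 1 + e + (i + 1) = (i + 1 + e + i) + 1 by ring, show i + 1 + i = i + i + 1 by ring]
    simp only [Nat.factorial_succ (i + 1 + e + i), Nat.factorial_succ e,
      Nat.factorial_succ (i + i)]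
    have h1 : (e.factorial : ℝ) ≠ 0 := by positivity
    have h2 : ((i + i).factorial : ℝ) ≠ 0 := by positivity
    have h3 : ((i + 1 + e + i).factorial : ℝ) ≠ 0 := by positivity
    have h4 : ((e : ℝ) + 1) ≠ 0 := by positivity
    have h5 : ((i : ℝ) + i + 1) ≠ 0 := by positivity
    have h6 : ((i : ℝ) + 1 + e + i + 1) ≠ 0 := by positivity
    have h7 : ((i : ℝ) + (i + 1 + e) + 1) ≠ 0 := by positivity
    push_cast
    rw [show ((i : ℝ) + 1 + e - i) = e + 1 by ring]
    simp
    field_simp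
    ring
  | succ M hi ih =>
    intro n hn
    obtain ⟨e, rfl⟩ := Nat.exists_eq_add_of_le hn
    have key : ∀ k ∈ Finset.Ico i (M + 1), (-1 : ℝ) ^ k * (2 * (k : ℝ) + 1) *
        ((k + i).factorial : ℝ) /
        (((k - i).factorial : ℝ) * ((M + 1 - k).factorial : ℝ) * ((M + 1 + 1 + k).factorial : ℝ)) /
        ((((M + 1 + 1 + e : ℕ) : ℝ) - k) * ((k : ℝ) + ((M + 1 + 1 + e : ℕ) : ℝ) + 1))
      = ((-1 : ℝ) ^ k * (2 * (k : ℝ) + 1) * ((k + i).factorial : ℝ) /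
      (((k - i).factorial : ℝ) * ((M - k).factorial : ℝ) * ((M + 1 + k).factorial : ℝ)) /
        ((((M + 1 : ℕ) : ℝ) - k) * ((k : ℝ) + ((M + 1 : ℕ) : ℝ) + 1)) -
        (-1 : ℝ) ^ k * (2 * (k : ℝ) + 1) * ((k + i).factorial : ℝ) /
      (((k - i).factorial : ℝ) * ((M - k).factorial : ℝ) * ((M + 1 + k).factorial : ℝ)) /
        ((((M + 1 + 1 + e : ℕ) : ℝ) - k) * ((k : ℝ) + ((M + 1 + 1 + e : ℕ) : ℝ) + 1))) /
        (((e : ℝ) + 1) * (2 * M + e + 4)) := by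
      intro k hk
      rw [Finset.mem_Ico] at hk
      obtain ⟨u, rfl⟩ := Nat.exists_eq_add_of_le hk.1
      obtain ⟨v, rfl⟩ := Nat.exists_eq_add_of_le (Nat.lt_succ_iff.mp hk.2)
      rw [show i + u + v + 1 - (i + u) = v + 1 by omega, show i + u + v - (i + u) = v by omega,
        show i + u + v + 1 + 1 + (i + u) = (i + u + v + 1 + (i + u)) + 1 by ring]
      rw [Nat.factorial_succ (i + u + v + 1 + (i + u)), Nat.factorial_succ v]
      have h1 : (v.factorial : ℝ) ≠ 0 := by positivity
      have h2 : ((i + u + v + 1 + (i + u)).factorial : ℝ) ≠ 0 := by positivity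
      have h3 : ((i + u - i).factorial : ℝ) ≠ 0 := by positivity
      push_cast
      rw [show ((i : ℝ) + u + v + 1 - (i + u)) = v + 1 by ring,
        show ((i : ℝ) + u + v + 1 + 1 + e - (i + u)) = v + e + 2 by ring]
      have h4 : ((v : ℝ) + 1) ≠ 0 := by positivity
      have h5 : ((v : ℝ) + e + 2) ≠ 0 := by positivity
      have h6 : ((i : ℝ) + u + v + 1 + (i + u) + 1) ≠ 0 := by positivity
      have h7 : ((i : ℝ) + u + (i + u + v + 1) + 1) ≠ 0 := by positivity
      have h8 : ((i : ℝ) + u + (i + u + v + 1 + 1 + e) + 1) ≠ 0 := by positivity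
      have h9 : (2 * ((i : ℝ) + u + v) + e + 4) ≠ 0 := by positivity
      have h10 : ((e : ℝ) + 1) ≠ 0 := by positivity
      field_simp
      ring
    rw [Finset.sum_Ico_succ_top (by omega), Finset.sum_congr rfl key, ← Finset.sum_div,
      Finset.sum_sub_distrib, ih (M + 1) le_rfl, ih (M + 1 + 1 + e) (by omega)]
    obtain ⟨v, rfl⟩ := Nat.exists_eq_add_of_le hi
    rw [show i + v + 1 - i = v + 1 by omega, show i + v + 1 + 1 + e - i = v + e + 2 by omega,
      show i + v + 1 + 1 + e - (i + v + 1) = e + 1 by omega,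
      show i + v + 1 + 1 + e - (i + v + 1 + 1) = e by omega,
      show i + v + 1 + 1 + e + (i + v + 1 + 1) = (i + v + 1 + 1 + e + (i + v + 1)) + 1 by ring,
      show i + v + 1 + 1 + (i + v + 1) = (i + v + 1 + (i + v + 1)) + 1 by ring,
      Nat.sub_self]
    rw [Nat.factorial_succ (i + v + 1 + 1 + e + (i + v + 1)),
      Nat.factorial_succ (i + v + 1 + (i + v + 1)), Nat.factorial_succ e]
    have h1 : ((i + v + 1 + 1 + e + (i + v + 1)).factorial : ℝ) ≠ 0 := by positivity
    have h2 : ((i + v + 1 + (i + v + 1)).factorial : ℝ) ≠ 0 := by positivity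
    have h3 : (e.factorial : ℝ) ≠ 0 := by positivity
    have h3' : ((v+1).factorial : ℝ) ≠ 0 := by positivity
    have h3'' : ((v+e+2).factorial : ℝ) ≠ 0 := by positivity
    push_cast
    simp only [Nat.factorial_zero]
    rw [show ((i : ℝ) + v + 1 + 1 + e - (i + v + 1)) = e + 1 by ring]
    have h4 : ((i : ℝ) + v + 1 + 1 + e + (i + v + 1) + 1) ≠ 0 := by positivity
    have h5 : ((i : ℝ) + v + 1 + (i + v + 1) + 1) ≠ 0 := by positivity
    have h6 : ((i : ℝ) + v + 1 + (i + v + 1 + 1 + e) + 1) ≠ 0 := by positivity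
    have h7 : (2 * ((i : ℝ) + v) + e + 4) ≠ 0 := by positivity
    have h8 : ((e : ℝ) + 1) ≠ 0 := by positivity
    push_cast
    field_simp
    ring

lemma harm_succ (k : ℕ) : harm (k + 1) = harm k + 1 / ((k : ℝ) + 1) := by
  simp [harm, Finset.sum_range_succ]

lemma aux_C (i n : ℕ) (hin : i ≤ n) (m : ℕ) : m ≤ i →
    ((n + i).factorial : ℝ) / ((n - i).factorial : ℝ) *
      (harm n - harm (n - m) - harm i + harm (i - m))
    = ∑ q ∈ Finset.Ico i n, (2 * (q : ℝ) + 1) / (((n : ℝ) - q) * ((q : ℝ) + n + 1)) *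
      (1 - ((q - m).factorial : ℝ) * ((n + m).factorial : ℝ) /
        (((q + m).factorial : ℝ) * ((n - m).factorial : ℝ))) *
      (((q + i).factorial : ℝ) / ((q - i).factorial : ℝ)) := by
  induction m with
  | zero =>
    intro _
    rw [Finset.sum_eq_zero]
    · simp
    · intro q _
      have h1 : ((q.factorial : ℝ)) ≠ 0 := by positivity
      have h2 : ((n.factorial : ℝ)) ≠ 0 := by positivity
      simp [h1, h2]
  | succ m ih =>
    intro hm
    have ih := ih (by omega)
    have key : ∀ q ∈ Finset.Ico i n, (2 * (q : ℝ) + 1) / (((n : ℝ) - q) * ((q : ℝ) + n + 1)) *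
      (1 - ((q - (m+1)).factorial : ℝ) * ((n + (m+1)).factorial : ℝ) /
        (((q + (m+1)).factorial : ℝ) * ((n - (m+1)).factorial : ℝ))) *
      (((q + i).factorial : ℝ) / ((q - i).factorial : ℝ)) =
      (2 * (q : ℝ) + 1) / (((n : ℝ) - q) * ((q : ℝ) + n + 1)) *
      (1 - ((q - m).factorial : ℝ) * ((n + m).factorial : ℝ) /
        (((q + m).factorial : ℝ) * ((n - m).factorial : ℝ))) *
      (((q + i).factorial : ℝ) / ((q - i).factorial : ℝ))
      - ((n + m).factorial : ℝ) / ((n - m).factorial : ℝ) *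
      ((2 * (q : ℝ) + 1) * ((q + i).factorial : ℝ) *
      ((q - (m + 1)).factorial : ℝ) / (((q - i).factorial : ℝ) * ((q + m + 1).factorial : ℝ))) := by
      intro q hq
      rw [Finset.mem_Ico] at hq
      obtain ⟨f, rfl⟩ := Nat.exists_eq_add_of_le hm
      obtain ⟨g, rfl⟩ := Nat.exists_eq_add_of_le hq.1
      obtain ⟨h, rfl⟩ := Nat.exists_eq_add_of_lt hq.2
      rw [show m + 1 + f + g - (m + 1) = f + g by omega,
        show m + 1 + f + g - m = f + g + 1 by omega,
        show m + 1 + f + g + h + 1 - (m + 1) = f + g + h + 1 by omega,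
        show m + 1 + f + g + h + 1 - m = f + g + h + 1 + 1 by omega,
        show m + 1 + f + g - (m + 1 + f) = g by omega,
        ← add_assoc, ← add_assoc]
      rw [Nat.factorial_succ (f + g), Nat.factorial_succ (f + g + h + 1),
        Nat.factorial_succ (m + 1 + f + g + h + 1 + m), Nat.factorial_succ (m + 1 + f + g + m)]
      have h1 : ((f + g).factorial : ℝ) ≠ 0 := by positivity
      have h2 : ((f + g + h + 1).factorial : ℝ) ≠ 0 := by positivity
      have h3 : ((m + 1 + f + g + h + 1 + m).factorial : ℝ) ≠ 0 := by positivity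
      have h4 : ((m + 1 + f + g + m).factorial : ℝ) ≠ 0 := by positivity
      have h5 : ((g).factorial : ℝ) ≠ 0 := by positivity
      push_cast
      rw [show (m : ℝ) + 1 + f + g + h + 1 - (m + 1 + f + g) = h + 1 by ring]
      have h6 : ((h : ℝ) + 1) ≠ 0 := by positivity
      have h7 : ((m : ℝ) + 1 + f + g + (m + 1 + f + g + h + 1) + 1) ≠ 0 := by positivity
      have h8 : ((f : ℝ) + g + h + 1 + 1) ≠ 0 := by positivity
      have h9 : ((m : ℝ) + 1 + f + g + m + 1) ≠ 0 := by positivity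
      have h10 : ((f : ℝ) + g + 1) ≠ 0 := by positivity
      field_simp
      ring
    rw [Finset.sum_congr rfl key, Finset.sum_sub_distrib, ← Finset.mul_sum,
      aux_tel i m n (by omega) hin, ← ih]
    obtain ⟨f, rfl⟩ := Nat.exists_eq_add_of_le hm
    obtain ⟨g, rfl⟩ := Nat.exists_eq_add_of_le hin
    rw [show m + 1 + f + g - (m + 1) = f + g by omega,
        show m + 1 + f + g - m = f + g + 1 by omega,
        show m + 1 + f - (m + 1) = f by omega,
        show m + 1 + f - m = f + 1 by omega,
        show m + 1 + f + g - (m + 1 + f) = g by omega]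
    rw [harm_succ (f + g), harm_succ f, Nat.factorial_succ (f + g)]
    have h1 : ((f + g).factorial : ℝ) ≠ 0 := by positivity
    have h3 : ((m + 1 + f + g + m).factorial : ℝ) ≠ 0 := by positivity
    have h5 : ((g).factorial : ℝ) ≠ 0 := by positivity
    push_cast
    rw [show (m : ℝ) + 1 + f - m = f + 1 by ring]
    have h6 : ((f : ℝ) + 1) ≠ 0 := by positivity
    have h10 : ((f : ℝ) + g + 1) ≠ 0 := by positivity
    field_simp
    ring

lemma aux_S (M k : ℕ) (hk : k ≤ M) (t : ℝ) :
    ∑ j ∈ Finset.range (k + 1),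
      (-1 : ℝ) ^ j * ((k + j).factorial : ℝ) /
        (((k - j).factorial : ℝ) * ((M + 1 + j).factorial : ℝ) * (j.factorial : ℝ)) * (t + 1) ^ j
    = ∑ i ∈ Finset.range (k + 1), (-1 : ℝ) ^ i * ((k + i).factorial : ℝ) * ((M - i).factorial : ℝ) /
        (((k - i).factorial : ℝ) * (i.factorial : ℝ) * ((M - k).factorial : ℝ) *
          ((M + 1 + k).factorial : ℝ)) * t ^ i := by
  simp only [add_pow, one_pow, mul_one, Finset.mul_sum]
  rw [Finset.sum_comm' (s' := fun i => Finset.Ico i (k + 1)) (t' := Finset.range (k + 1))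
    (by intro x y; simp only [Finset.mem_range, Finset.mem_Ico]; omega)]
  apply Finset.sum_congr rfl
  intro i hi
  rw [Finset.mem_range] at hi
  obtain ⟨K, rfl⟩ := Nat.exists_eq_add_of_le (Nat.lt_succ_iff.mp hi)
  obtain ⟨v, rfl⟩ := Nat.exists_eq_add_of_le hk
  rw [Finset.sum_Ico_eq_sum_range, show i + K + 1 - i = K + 1 by omega,
    show i + K + v - (i + K) = v by omega, show i + K - i = K by omega,
    show i + K + v - i = v + K by omega]
  have H := aux_diff K (i + K + i) v
  rw [show i + K + i + v + 1 + K = i + K + v + 1 + (i + K) by ring] at H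
  have e : (-1 : ℝ) ^ i * ((i + K + i).factorial : ℝ) * ((v + K).factorial : ℝ) /
        ((K.factorial : ℝ) * (i.factorial : ℝ) * (v.factorial : ℝ) *
          ((i + K + v + 1 + (i + K)).factorial : ℝ)) * t ^ i
      = (-1 : ℝ) ^ i * t ^ i / ((K.factorial : ℝ) * (i.factorial : ℝ)) *
        (((i + K + i).factorial : ℝ) * ((v + K).factorial : ℝ) /
          ((v.factorial : ℝ) * ((i + K + v + 1 + (i + K)).factorial : ℝ))) := by
    field_simp
  rw [e, ← H, Finset.mul_sum]
  apply Finset.sum_congr rfl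
  intro l hl
  rw [Finset.mem_range] at hl
  obtain ⟨w, rfl⟩ := Nat.exists_eq_add_of_le (Nat.lt_succ_iff.mp hl)
  rw [show i + (l + w) - (i + l) = w by omega,
    show i + (l + w) + v + 1 + (i + l) = i + (l + w) + i + v + 1 + l by ring,
    show i + (l + w) + (i + l) = i + (l + w) + i + l by ring,
    Nat.cast_choose ℝ (Nat.le_add_right i l), Nat.cast_choose ℝ (Nat.le_add_right l w),
    Nat.add_sub_cancel_left, Nat.add_sub_cancel_left]
  have h1 : ((i + l).factorial : ℝ) ≠ 0 := by positivity
  have h2 : ((l + w).factorial : ℝ) ≠ 0 := by positivity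
  have h3 : ((i + (l + w) + i + v + 1 + l).factorial : ℝ) ≠ 0 := by positivity
  have h4 : (i.factorial : ℝ) ≠ 0 := by positivity
  have h5 : (l.factorial : ℝ) ≠ 0 := by positivity
  have h6 : (w.factorial : ℝ) ≠ 0 := by positivity
  rw [pow_add]
  field_simp

lemma aux_part1 (M n : ℕ) (hn : M + 1 ≤ n) (t : ℝ) :
    ((n + (M + 1)).factorial : ℝ) / ((n - (M + 1)).factorial : ℝ) *
      ∑ k ∈ Finset.range (M + 1),
        (-1 : ℝ) ^ k * ((2 * k + 1 : ℝ) / (((n : ℝ) - k) * ((k : ℝ) + n + 1))) *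
        ∑ j ∈ Finset.range (k + 1),
          (-1 : ℝ) ^ j * ((k + j).factorial : ℝ) /
            (((k - j).factorial : ℝ) * ((M + 1 + j).factorial : ℝ) * (j.factorial : ℝ)) *
              (t + 1) ^ j
    = ∑ i ∈ Finset.range (M + 1), ((n + i).factorial : ℝ) /
        ((i.factorial : ℝ) ^ 2 * ((n - i).factorial : ℝ)) * (i.factorial : ℝ) *
          ((-1 : ℝ) ^ (M - i) * ((M - i).factorial : ℝ)) * t ^ i := by
  have e : ∀ k ∈ Finset.range (M + 1),
        (-1 : ℝ) ^ k * ((2 * k + 1 : ℝ) / (((n : ℝ) - k) * ((k : ℝ) + n + 1))) *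
        ∑ j ∈ Finset.range (k + 1),
          (-1 : ℝ) ^ j * ((k + j).factorial : ℝ) /
            (((k - j).factorial : ℝ) * ((M + 1 + j).factorial : ℝ) * (j.factorial : ℝ)) *
              (t + 1) ^ j
      = ∑ i ∈ Finset.range (k + 1), ((-1 : ℝ) ^ i * ((M - i).factorial : ℝ) / (i.factorial : ℝ) *
          t ^ i) * ((-1 : ℝ) ^ k * (2 * (k : ℝ) + 1) * ((k + i).factorial : ℝ) /
      (((k - i).factorial : ℝ) * ((M - k).factorial : ℝ) * ((M + 1 + k).factorial : ℝ)) /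
        (((n : ℝ) - k) * ((k : ℝ) + n + 1))) := by
    intro k hk
    rw [Finset.mem_range] at hk
    rw [aux_S M k (by omega), Finset.mul_sum]
    apply Finset.sum_congr rfl
    intro i _
    have : (n : ℝ) - k ≠ 0 := by
      have : (k : ℝ) < n := by exact_mod_cast (by omega : k < n)
      linarith
    have : (k : ℝ) + n + 1 ≠ 0 := by positivity
    field_simp
  rw [Finset.sum_congr rfl e,
    Finset.sum_comm' (s' := fun i => Finset.Ico i (M + 1)) (t' := Finset.range (M + 1))
    (by intro x y; simp only [Finset.mem_range, Finset.mem_Ico]; omega), Finset.mul_sum]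
  apply Finset.sum_congr rfl
  intro i hi
  rw [Finset.mem_range] at hi
  rw [← Finset.mul_sum, aux_B i M (by omega) n hn]
  obtain ⟨K, rfl⟩ := Nat.exists_eq_add_of_le (Nat.lt_succ_iff.mp hi)
  rw [show i + K - i = K by omega, pow_add]
  have h1 : ((n - i).factorial : ℝ) ≠ 0 := by positivity
  have h2 : ((n - (i + K + 1)).factorial : ℝ) ≠ 0 := by positivity
  have h3 : ((n + (i + K + 1)).factorial : ℝ) ≠ 0 := by positivity
  have h4 : (i.factorial : ℝ) ≠ 0 := by positivity
  have h5 : (-1 : ℝ) ^ i * (-1) ^ i = 1 := by rw [← mul_pow]; simp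
  field_simp
  linear_combination t ^ i * h5

lemma aux_L1 (m : ℕ) : ∀ (p : ℕ) (y : ℝ), 1 < y →
    iteratedDeriv m (fun y : ℝ => (y - 1) ^ (m + p) * Real.log (y - 1)) y
    = ((m + p).factorial : ℝ) / (p.factorial : ℝ) * (y - 1) ^ p *
      (Real.log (y - 1) + harm (m + p) - harm p) := by
  induction m with
  | zero =>
    intro p y _
    have : (p.factorial : ℝ) ≠ 0 := by positivity
    simp [this]
  | succ m ih =>
    intro p y hy
    have hy' : y - 1 ≠ 0 := by linarith
    rw [iteratedDeriv_succ, show m + 1 + p = m + (p + 1) by ring]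
    have hev : iteratedDeriv m (fun y : ℝ => (y - 1) ^ (m + (p + 1)) * Real.log (y - 1))
        =ᶠ[nhds y] fun y => ((m + (p + 1)).factorial : ℝ) / ((p + 1).factorial : ℝ) *
          (y - 1) ^ (p + 1) * (Real.log (y - 1) + harm (m + (p + 1)) - harm (p + 1)) := by
      filter_upwards [lt_mem_nhds hy] with z hz using ih (p + 1) z hz
    rw [hev.deriv_eq]
    have h0 : HasDerivAt (fun y : ℝ => y - 1) 1 y := (hasDerivAt_id y).sub_const 1
    have h1 := (h0.pow (p + 1)).const_mul (((m + (p + 1)).factorial : ℝ) / ((p + 1).factorial : ℝ))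
    have h2 := ((h0.log hy').add_const (harm (m + (p + 1)))).sub_const (harm (p + 1))
    have h3 := h1.mul h2
    refine Eq.trans h3.deriv ?_
    rw [harm_succ p, Nat.factorial_succ p]
    have : (p.factorial : ℝ) ≠ 0 := by positivity
    have : (p : ℝ) + 1 ≠ 0 := by positivity
    simp only [Nat.add_sub_cancel, Pi.pow_apply]
    push_cast
    field_simp
    ring

lemma aux_L2 (i e : ℕ) : ∀ (y : ℝ), 1 < y →
    iteratedDeriv (i + 1 + e) (fun y : ℝ => (y - 1) ^ i * Real.log (y - 1)) y
    = (i.factorial : ℝ) * ((-1 : ℝ) ^ e * (e.factorial : ℝ)) * (y - 1) ^ (-((e : ℤ) + 1)) := by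
  induction e with
  | zero =>
    intro y hy
    have hy' : y - 1 ≠ 0 := by linarith
    rw [add_zero, iteratedDeriv_succ]
    have hev : iteratedDeriv i (fun y : ℝ => (y - 1) ^ i * Real.log (y - 1))
        =ᶠ[nhds y] fun y => (i.factorial : ℝ) * (Real.log (y - 1) + harm i - harm 0) := by
      filter_upwards [lt_mem_nhds hy] with z hz
      have := aux_L1 i 0 z hz
      simpa using this
    rw [hev.deriv_eq]
    have h0 : HasDerivAt (fun y : ℝ => y - 1) 1 y := (hasDerivAt_id y).sub_const 1
    have h2 := (((h0.log hy').add_const (harm i)).sub_const (harm 0)).const_mul (i.factorial : ℝ)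
    refine Eq.trans h2.deriv ?_
    simp
  | succ e ih =>
    intro y hy
    have hy' : y - 1 ≠ 0 := by linarith
    rw [← add_assoc, iteratedDeriv_succ]
    have hev : iteratedDeriv (i + 1 + e) (fun y : ℝ => (y - 1) ^ i * Real.log (y - 1))
        =ᶠ[nhds y] fun y => (i.factorial : ℝ) * ((-1 : ℝ) ^ e * (e.factorial : ℝ)) *
          (y - 1) ^ (-((e : ℤ) + 1)) := by
      filter_upwards [lt_mem_nhds hy] with z hz using ih z hz
    rw [hev.deriv_eq]
    have h0 : HasDerivAt (fun y : ℝ => y - 1) 1 y := (hasDerivAt_id y).sub_const 1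
    have h1 := ((hasDerivAt_zpow (-((e : ℤ) + 1)) (y - 1) (Or.inl hy')).comp y h0).const_mul
      ((i.factorial : ℝ) * ((-1 : ℝ) ^ e * (e.factorial : ℝ)))
    refine Eq.trans h1.deriv ?_
    rw [Nat.factorial_succ, show -((e : ℤ) + 1) - 1 = -(((e + 1 : ℕ) : ℤ) + 1) by push_cast; ring]
    push_cast
    ring

lemma aux_P (m d : ℕ) (x : ℝ) :
    iteratedDeriv m (legendreP (m + d)) x =
      ∑ p ∈ Finset.range (d + 1), ((m + d + (m + p)).factorial : ℝ) /
        (((m + p).factorial : ℝ) ^ 2 * ((d - p).factorial : ℝ)) / 2 ^ (m + p) *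
        (((m + p).factorial : ℝ) / (p.factorial : ℝ) * (x - 1) ^ p) := by
  have e : legendreP (m + d) = fun y => ∑ i ∈ Finset.range (m + d + 1),
      (((m + d + i).factorial : ℝ) /
        ((i.factorial : ℝ) ^ 2 * ((m + d - i).factorial : ℝ)) / 2 ^ i) * (y - 1) ^ i := by
    funext y
    unfold legendreP
    apply Finset.sum_congr rfl
    intro i _
    rw [div_pow]
    ring
  have hd : ∀ i : ℕ, iteratedDeriv m (fun y : ℝ => (y - 1) ^ i) x
      = (i.descFactorial m : ℝ) * (x - 1) ^ (i - m) := by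
    intro i
    have := congrFun (iteratedDeriv_comp_sub_const (n := m) (f := fun z : ℝ => z ^ i) (s := (1:ℝ))) x
    rw [this, iteratedDeriv_pow]
  rw [e, iteratedDeriv_fun_sum (by intro i _; fun_prop)]
  simp only [iteratedDeriv_const_mul_field, hd]
  rw [show m + d + 1 = m + (d + 1) by ring, Finset.sum_range_add, Finset.sum_eq_zero, zero_add]
  · apply Finset.sum_congr rfl
    intro p hp
    rw [show m + d - (m + p) = d - p by omega, Nat.add_sub_cancel_left]
    congr 2
    rw [eq_div_iff (by positivity)]
    have := Nat.factorial_mul_descFactorial (Nat.le_add_right m p)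
    rw [Nat.add_sub_cancel_left] at this
    rw [mul_comm]
    exact_mod_cast this
  · intro i hi
    rw [Finset.mem_range] at hi
    simp [Nat.descFactorial_eq_zero_iff_lt.mpr hi]

lemma aux_PL (m d : ℕ) (x : ℝ) (hx : 1 < x) :
    iteratedDeriv m (fun y => legendreP (m + d) y * Real.log (y - 1)) x =
      ∑ i ∈ Finset.range m, ((m + d + i).factorial : ℝ) /
        ((i.factorial : ℝ) ^ 2 * ((m + d - i).factorial : ℝ)) / 2 ^ i *
        ((i.factorial : ℝ) * ((-1 : ℝ) ^ (m - 1 - i) * ((m - 1 - i).factorial : ℝ)) *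
          ((x - 1) ^ (-(m : ℤ)) * (x - 1) ^ i)) +
      ∑ p ∈ Finset.range (d + 1), ((m + d + (m + p)).factorial : ℝ) /
        (((m + p).factorial : ℝ) ^ 2 * ((d - p).factorial : ℝ)) / 2 ^ (m + p) *
        (((m + p).factorial : ℝ) / (p.factorial : ℝ) * (x - 1) ^ p *
          (Real.log (x - 1) + harm (m + p) - harm p)) := by
  have hx' : x - 1 ≠ 0 := by linarith
  have e : (fun y => legendreP (m + d) y * Real.log (y - 1)) =
      fun y => ∑ i ∈ Finset.range (m + d + 1),
      (((m + d + i).factorial : ℝ) /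
        ((i.factorial : ℝ) ^ 2 * ((m + d - i).factorial : ℝ)) / 2 ^ i) *
          ((y - 1) ^ i * Real.log (y - 1)) := by
    funext y
    unfold legendreP
    rw [Finset.sum_mul]
    apply Finset.sum_congr rfl
    intro i _
    rw [div_pow]
    ring
  rw [e, iteratedDeriv_fun_sum (by
    intro i _
    have : ContDiffAt ℝ m (fun y : ℝ => Real.log (y - 1)) x :=
      ContDiffAt.log (by fun_prop) hx'
    fun_prop)]
  simp only [iteratedDeriv_const_mul_field]
  rw [show m + d + 1 = m + (d + 1) by ring, Finset.sum_range_add]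
  congr 1
  · apply Finset.sum_congr rfl
    intro i hi
    rw [Finset.mem_range] at hi
    obtain ⟨v, rfl⟩ := Nat.exists_eq_add_of_lt hi
    have := aux_L2 i v x hx
    rw [show i + v + 1 = i + 1 + v by ring, this, show i + 1 + v - 1 - i = v by omega]
    congr 2
    rw [← zpow_natCast, ← zpow_add₀ hx']
    congr 1
    push_cast
    ring
  · apply Finset.sum_congr rfl
    intro p hp
    rw [aux_L1 m p x hx, show m + d - (m + p) = d - p by omega]

lemma aux_part2 (m d : ℕ) (X : ℝ) :
    ∑ k ∈ Finset.range d,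
          ((2 * k + 2 * m + 1 : ℝ) / ((((m + d : ℕ) : ℝ) - m - k) *
            ((k : ℝ) + ((m + d : ℕ) : ℝ) + m + 1))) *
            (1 - ((k.factorial : ℝ) * ((m + d + m).factorial : ℝ)) /
                (((k + 2 * m).factorial : ℝ) * (d.factorial : ℝ))) *
      ∑ p ∈ Finset.range (k + 1), ((m + k + (m + p)).factorial : ℝ) /
        (((m + p).factorial : ℝ) ^ 2 * ((k - p).factorial : ℝ)) / 2 ^ (m + p) *
        (((m + p).factorial : ℝ) / (p.factorial : ℝ) * X ^ p)
    = ∑ p ∈ Finset.range (d + 1), ((m + d + (m + p)).factorial : ℝ) /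
        (((m + p).factorial : ℝ) ^ 2 * ((d - p).factorial : ℝ)) / 2 ^ (m + p) *
        (((m + p).factorial : ℝ) / (p.factorial : ℝ) * X ^ p *
          (harm (m + d) - harm d - harm (m + p) + harm p)) := by
  simp only [Finset.mul_sum]
  rw [Finset.sum_range_succ, Finset.sum_comm' (s' := fun i => Finset.Ico i d)
    (t' := Finset.range d)
    (by intro x y; simp only [Finset.mem_range, Finset.mem_Ico]; omega)]
  rw [show harm (m + d) - harm d - harm (m + d) + harm d = 0 by ring, mul_zero, mul_zero, add_zero]
  apply Finset.sum_congr rfl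
  intro p hp
  rw [Finset.mem_range] at hp
  have H := aux_C (m + p) (m + d) (by omega) m (by omega)
  rw [show m + d - (m + p) = d - p by omega, Nat.add_sub_cancel_left, Nat.add_sub_cancel_left,
    add_comm m p, add_comm m d, ← Finset.sum_Ico_add'] at H
  rw [show ((m + d + (m + p)).factorial : ℝ) /
        (((m + p).factorial : ℝ) ^ 2 * ((d - p).factorial : ℝ)) / 2 ^ (m + p) *
        (((m + p).factorial : ℝ) / (p.factorial : ℝ) * X ^ p *
          (harm (m + d) - harm d - harm (m + p) + harm p))
      = (1 / ((m + p).factorial : ℝ) ^ 2 / 2 ^ (m + p) *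
        (((m + p).factorial : ℝ) / (p.factorial : ℝ) * X ^ p)) *
        (((d + m + (p + m)).factorial : ℝ) / ((d - p).factorial : ℝ) *
          (harm (d + m) - harm d - harm (p + m) + harm p)) by
    rw [add_comm d m, add_comm p m]
    ring, H, Finset.mul_sum]
  apply Finset.sum_congr rfl
  intro k hk
  rw [Nat.add_sub_cancel, show k + m + m = k + 2 * m by ring,
    show k + m - (p + m) = k - p by omega, add_comm d m, add_comm p m, add_comm m k]
  push_cast
  rw [show (2 * (k : ℝ) + 2 * m + 1) = 2 * (k + m) + 1 by ring,
    show ((m : ℝ) + d - m - k) = m + d - (k + m) by ring,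
    show ((k : ℝ) + (m + d) + m + 1) = k + m + (m + d) + 1 by ring]
  ring

lemma aux_part1' (m n : ℕ) (hn : m ≤ n) (x : ℝ) :
    ((n + m).factorial : ℝ) / ((n - m).factorial : ℝ) * (x - 1) ^ (-(m : ℤ)) *
          ∑ k ∈ Finset.range m,
            (-1 : ℝ) ^ k * ((2 * k + 1 : ℝ) / (((n : ℝ) - k) * ((k : ℝ) + n + 1))) *
              ∑ j ∈ Finset.range (k + 1),
                (-1 : ℝ) ^ j * ((k + j).factorial : ℝ) /
                    (((k - j).factorial : ℝ) * ((m + j).factorial : ℝ) *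
                      (j.factorial : ℝ)) * ((x + 1) / 2) ^ j
    = ∑ i ∈ Finset.range m, ((n + i).factorial : ℝ) /
        ((i.factorial : ℝ) ^ 2 * ((n - i).factorial : ℝ)) / 2 ^ i *
        ((i.factorial : ℝ) * ((-1 : ℝ) ^ (m - 1 - i) * ((m - 1 - i).factorial : ℝ)) *
          ((x - 1) ^ (-(m : ℤ)) * (x - 1) ^ i)) := by
  cases m with
  | zero => simp
  | succ M =>
    have h := aux_part1 M n hn ((x - 1) / 2)
    rw [show (x - 1) / 2 + 1 = (x + 1) / 2 by ring] at h
    rw [mul_right_comm, h, Finset.sum_mul]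
    apply Finset.sum_congr rfl
    intro i _
    rw [Nat.add_sub_cancel, div_pow]
    ring

theorem stmt_9 (m n : ℕ) (hmn : m ≤ n) (x : ℝ) (hx : 1 < x) :
    iteratedDeriv m (fun y => legendreP n y * Real.log (y - 1)) x =
      iteratedDeriv m (legendreP n) x * Real.log (x - 1)
      + (psi (n + 1) - psi (n - m + 1)) * iteratedDeriv m (legendreP n) x
      + ((n + m).factorial : ℝ) / ((n - m).factorial : ℝ) * (x - 1) ^ (-(m : ℤ)) *
          ∑ k ∈ Finset.range m,
            (-1 : ℝ) ^ k * ((2 * k + 1 : ℝ) / (((n : ℝ) - k) * ((k : ℝ) + n + 1))) *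
              ∑ j ∈ Finset.range (k + 1),
                (-1 : ℝ) ^ j * ((k + j).factorial : ℝ) /
                    (((k - j).factorial : ℝ) * ((m + j).factorial : ℝ) *
                      (j.factorial : ℝ)) * ((x + 1) / 2) ^ j
      - ∑ k ∈ Finset.range (n - m),
          ((2 * k + 2 * m + 1 : ℝ) / (((n : ℝ) - m - k) * ((k : ℝ) + n + m + 1))) *
            (1 - ((k.factorial : ℝ) * ((n + m).factorial : ℝ)) /
                (((k + 2 * m).factorial : ℝ) * ((n - m).factorial : ℝ))) *
            iteratedDeriv m (legendreP (k + m)) x := by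
  obtain ⟨d, rfl⟩ := Nat.exists_eq_add_of_le hmn
  have hpsi : psi (m + d + 1) - psi (d + 1) = harm (m + d) - harm d := by
    simp [psi]
  have h2 := aux_part2 m d (x - 1)
  have h3 : ∀ k : ℕ, iteratedDeriv m (legendreP (k + m)) x =
      ∑ p ∈ Finset.range (k + 1), ((m + k + (m + p)).factorial : ℝ) /
        (((m + p).factorial : ℝ) ^ 2 * ((k - p).factorial : ℝ)) / 2 ^ (m + p) *
        (((m + p).factorial : ℝ) / (p.factorial : ℝ) * (x - 1) ^ p) := by
    intro k
    rw [add_comm k m, aux_P]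
  rw [aux_part1' m (m + d) hmn x, Nat.add_sub_cancel_left, hpsi, aux_PL m d x hx]
  simp only [h3]
  rw [h2, aux_P]
  have h4 : ∑ p ∈ Finset.range (d + 1), ((m + d + (m + p)).factorial : ℝ) /
        (((m + p).factorial : ℝ) ^ 2 * ((d - p).factorial : ℝ)) / 2 ^ (m + p) *
        (((m + p).factorial : ℝ) / (p.factorial : ℝ) * (x - 1) ^ p *
          (Real.log (x - 1) + harm (m + p) - harm p))
      = (∑ p ∈ Finset.range (d + 1), ((m + d + (m + p)).factorial : ℝ) /
        (((m + p).factorial : ℝ) ^ 2 * ((d - p).factorial : ℝ)) / 2 ^ (m + p) *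
        (((m + p).factorial : ℝ) / (p.factorial : ℝ) * (x - 1) ^ p)) *
          (Real.log (x - 1) + (harm (m + d) - harm d))
        - ∑ p ∈ Finset.range (d + 1), ((m + d + (m + p)).factorial : ℝ) /
        (((m + p).factorial : ℝ) ^ 2 * ((d - p).factorial : ℝ)) / 2 ^ (m + p) *
        (((m + p).factorial : ℝ) / (p.factorial : ℝ) * (x - 1) ^ p *
          (harm (m + d) - harm d - harm (m + p) + harm p)) := by
    rw [Finset.sum_mul, ← Finset.sum_sub_distrib]
    apply Finset.sum_congr rfl
    intro p _
    ring
  rw [h4]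
  ring
end
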